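/- arXiv:1410.2847 — 16 statements merged into one kernel-verified Lean document; each statement's English description precedes it below -/
import Mathlib

section
/- For all integers i', j' with 1 ≤ i' ≤ j' ≤ n, there exists an index k with i' ≤ k ≤ j' such that S(i',j') ≤ D(k). (In other words, the sum of any segment is dominated by the candidate score of some index inside that segment.) -/
/-!
Since `S i j = C j - C (i - 1)` and `D k = C k - C (P k)`, take `k` to be the leftmost maximiser
of `C` on `[i', j']`, so that `S i' j' ≤ C k - C (i' - 1)`. If `C k ≤ C (i' - 1)`, the segment sum
is at most `0 ≤ D k`. Otherwise every index in `[i' - 1, k)` has a `C`-value below `C k`, so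
`LV k < i' - 1`; hence `i' - 1` lies in the window of `k` and `C (P k) ≤ C (i' - 1)`.
When `i' = 1` the index `i' - 1 = 0` is outside every window, and the hypothesis `A 1 = 0` lets
`1` play its role, because `C 1 = 0 = C 0`.
-/

theorem stmt_0
    (n : ℕ) (hn : 1 ≤ n)
    (A : ℕ → ℝ) (hA1 : A 1 = 0)
    (S : ℕ → ℕ → ℝ) (hS : ∀ i j : ℕ, S i j = ∑ k ∈ Finset.Icc i j, A k)
    (C : ℕ → ℝ) (hC : ∀ j : ℕ, C j = S 1 j)
    (LV : ℕ → ℕ)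
    (hLV : ∀ i : ℕ, 1 ≤ i → i ≤ n →
      LV i < i ∧ (1 ≤ LV i → C i ≤ C (LV i)) ∧
      (∀ j : ℕ, LV i < j → j < i → C j < C i))
    (P : ℕ → ℕ)
    (hP : ∀ i : ℕ, 1 ≤ i → i ≤ n →
      LV i + 1 ≤ P i ∧ P i ≤ i ∧
      (∀ k : ℕ, LV i + 1 ≤ k → k ≤ i → C (P i) ≤ C k) ∧
      (∀ k : ℕ, P i < k → k ≤ i → C (P i) < C k))
    (D : ℕ → ℝ)
    (hD : ∀ i : ℕ, 1 ≤ i → i ≤ n →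
      D i = if P i < i then S (P i + 1) i else 0)
    :
    ∀ i' j' : ℕ, 1 ≤ i' → i' ≤ j' → j' ≤ n →
      ∃ k : ℕ, i' ≤ k ∧ k ≤ j' ∧ S i' j' ≤ D k := by
  classical
  intro i j hi hij hjn
  have hCsum : ∀ m, C m = ∑ k ∈ Finset.Icc 1 m, A k := fun m => by rw [hC, hS]
  have hC0 : C 0 = 0 := by simp [hCsum]
  have hC1 : C 1 = 0 := by simp [hCsum, hA1]
  have hCs : ∀ m, C (m + 1) = C m + A (m + 1) := fun m => by
    rw [hCsum, hCsum, Finset.sum_Icc_succ_top (by omega)]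
  have hSC : ∀ a b, a ≤ b → S (a + 1) b = C b - C a := by
    intro a b hab
    induction b, hab using Nat.le_induction with
    | base => simp [hS]
    | succ b hab ih =>
      rw [hS] at ih ⊢
      rw [Finset.sum_Icc_succ_top (by omega), ih, hCs]
      ring
  have hDC : ∀ k, 1 ≤ k → k ≤ n → D k = C k - C (P k) := by
    intro k h1 h2
    rw [hD k h1 h2]
    have hPk := (hP k h1 h2).2.1
    split_ifs with h
    · exact hSC _ _ h.le
    · rw [show P k = k by omega, sub_self]
  have hex : ∃ k, (i ≤ k ∧ k ≤ j) ∧ ∀ m, i ≤ m → m ≤ j → C m ≤ C k := by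
    obtain ⟨k, hk, hmax⟩ := Finset.exists_max_image (Finset.Icc i j) C ⟨i, by simp [hij]⟩
    exact ⟨k, Finset.mem_Icc.1 hk, fun m h1 h2 => hmax m (Finset.mem_Icc.2 ⟨h1, h2⟩)⟩
  obtain ⟨k, ⟨⟨hik, hkj⟩, hmax⟩, hmin⟩ :
      ∃ k, ((i ≤ k ∧ k ≤ j) ∧ ∀ m, i ≤ m → m ≤ j → C m ≤ C k) ∧
        ∀ m, i ≤ m → m < k → C m < C k := by
    refine ⟨Nat.find hex, Nat.find_spec hex, fun m h1 h2 => ?_⟩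
    obtain ⟨⟨h3, h4⟩, h5⟩ := Nat.find_spec hex
    by_contra! h
    exact Nat.find_min hex h2 ⟨⟨h1, by omega⟩, fun l hl hl' => (h5 l hl hl').trans h⟩
  refine ⟨k, hik, hkj, ?_⟩
  obtain ⟨a, rfl⟩ : ∃ a, i = a + 1 := ⟨i - 1, by omega⟩
  rw [hSC a j (by omega), hDC k (by omega) (by omega)]
  have hj := hmax j hij le_rfl
  obtain ⟨hL1, hL2, -⟩ := hLV k (by omega) (by omega)
  obtain ⟨-, -, hP3, -⟩ := hP k (by omega) (by omega)
  rcases le_or_gt (C k) (C a) with h | h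
  · have := hP3 k (by omega) le_rfl
    linarith
  · have hLa : LV k = 0 ∨ LV k < a := by
      by_contra! hc
      have h1 := hL2 (by omega)
      rcases hc.2.eq_or_lt with h2 | h2
      · rw [← h2] at h1
        linarith
      · linarith [hmin (LV k) h2 hL1]
    have hPa : C (P k) ≤ C a := by
      rcases Nat.eq_zero_or_pos a with rfl | ha
      · have := hP3 1 (by omega) (by omega)
        linarith
      · exact hP3 a (by omega) (by omega)
    linarith
end

section
/- Let x' be any index with 1 ≤ x' ≤ n such that D(x') ≥ D(k) for all 1 ≤ k ≤ n. If P(x') < x', then S(i,j) ≤ S(P(x')+1, x') for all 1 ≤ i ≤ j ≤ n; and if P(x') = x', then S(i,j) ≤ 0 for all 1 ≤ i ≤ j ≤ n. (That is, the maximum-sum segment of the entire array is [P(x')+1, x'] when (P(x'),x') is a candidate, and is the empty range otherwise.) -/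
/-!
Every segment sum is a difference of prefix sums, `S (p + 1) j = C j - C p`, and `D k` is
`C k - C (P k)` whether or not `(P k, k)` is a candidate. It therefore suffices to bound
`C j - C p` by `D x'` for `1 ≤ p ≤ j ≤ n`, which is done by strong induction on `j`. If `LV j < p`,
then `p` lies in the window over which `P j` minimises `C`, so `C j - C p ≤ D j ≤ D x'`. Otherwise
`p ≤ LV j < j` and `C j ≤ C (LV j)`, so the bound for `LV j` suffices. Segments starting at
index `1` would need `p = 0`, but `A 1 = 0` gives `C 0 = C 1 = 0`, so `p = 1` serves instead.
-/

theorem stmt_1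
    (n : ℕ) (hn : 1 ≤ n)
    (A : ℕ → ℝ) (hA1 : A 1 = 0)
    (S : ℕ → ℕ → ℝ) (hS : ∀ i j : ℕ, S i j = ∑ k ∈ Finset.Icc i j, A k)
    (C : ℕ → ℝ) (hC : ∀ j : ℕ, C j = S 1 j)
    (LV : ℕ → ℕ)
    (hLV : ∀ i : ℕ, 1 ≤ i → i ≤ n →
      LV i < i ∧ (1 ≤ LV i → C i ≤ C (LV i)) ∧
      (∀ j : ℕ, LV i < j → j < i → C j < C i))
    (P : ℕ → ℕ)
    (hP : ∀ i : ℕ, 1 ≤ i → i ≤ n →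
      LV i + 1 ≤ P i ∧ P i ≤ i ∧
      (∀ k : ℕ, LV i + 1 ≤ k → k ≤ i → C (P i) ≤ C k) ∧
      (∀ k : ℕ, P i < k → k ≤ i → C (P i) < C k))
    (D : ℕ → ℝ)
    (hD : ∀ i : ℕ, 1 ≤ i → i ≤ n →
      D i = if P i < i then S (P i + 1) i else 0)
    (x' : ℕ) (hx'1 : 1 ≤ x') (hx'n : x' ≤ n)
    (hmax : ∀ k : ℕ, 1 ≤ k → k ≤ n → D k ≤ D x')
    :
    (P x' < x' → ∀ i j : ℕ, 1 ≤ i → i ≤ j → j ≤ n → S i j ≤ S (P x' + 1) x') ∧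
    (P x' = x' → ∀ i j : ℕ, 1 ≤ i → i ≤ j → j ≤ n → S i j ≤ 0) := by
  have hsum : ∀ p j : ℕ, p ≤ j → S (p + 1) j = C j - C p := by
    intro p j hpj
    have hIoc : ∀ a b : ℕ, Finset.Icc (a + 1) b = Finset.Ioc a b := by
      intro a b; ext k; simp only [Finset.mem_Icc, Finset.mem_Ioc]; omega
    have h := Finset.sum_Ioc_consecutive A (Nat.zero_le p) hpj
    rw [hC, hC, hS, hS, hS, hIoc p j, hIoc 0 j, hIoc 0 p]
    linarith
  have hDC : ∀ k : ℕ, 1 ≤ k → k ≤ n → D k = C k - C (P k) := by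
    intro k h1 hk
    obtain ⟨-, hle, -, -⟩ := hP k h1 hk
    rw [hD k h1 hk]
    split_ifs with h
    · exact hsum _ _ hle
    · rw [show P k = k by omega, sub_self]
  have hdiff : ∀ p j : ℕ, 1 ≤ p → p ≤ j → j ≤ n → C j - C p ≤ D x' := by
    intro p j hp
    induction j using Nat.strong_induction_on with
    | _ j ih =>
      intro hpj hjn
      obtain ⟨hlt, hge, -⟩ := hLV j (hp.trans hpj) hjn
      by_cases hvis : LV j < p
      · obtain ⟨-, -, hmin, -⟩ := hP j (hp.trans hpj) hjn
        have h1 := hmin p hvis hpj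
        have h2 := hmax j (hp.trans hpj) hjn
        rw [hDC j (hp.trans hpj) hjn] at h2
        linarith
      · have h1 := ih (LV j) hlt (by omega) (by omega)
        have h2 := hge (by omega)
        linarith
  have hseg : ∀ i j : ℕ, 1 ≤ i → i ≤ j → j ≤ n → S i j ≤ D x' := by
    intro i j hi hij hjn
    obtain rfl | hi2 := hi.eq_or_lt
    · have hC1 : C 1 = 0 := by simp [hC, hS, hA1]
      have h := hdiff 1 j le_rfl hij hjn
      rw [← hC]
      linarith
    · obtain ⟨p, rfl⟩ : ∃ p, i = p + 1 := ⟨i - 1, by omega⟩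
      rw [hsum p j (by omega)]
      exact hdiff p j (by omega) (by omega) hjn
  have hDx := hD x' hx'1 hx'n
  constructor
  · intro h
    rw [if_pos h] at hDx
    rwa [hDx] at hseg
  · intro h
    rw [if_neg h.not_lt] at hDx
    rwa [hDx] at hseg
end

section
/- Let 1 ≤ i ≤ j ≤ n and let x be an index with i ≤ x ≤ j such that D(x) ≥ D(k) for all i ≤ k ≤ j. Suppose P(x) < x and i ≤ P(x)+1 (so the candidate segment [P(x)+1, x] is contained in [i,j]). Then S(i',j') ≤ S(P(x)+1, x) for all i ≤ i' ≤ j' ≤ j; that is, [P(x)+1, x] is a maximum-sum segment of A on the range [i,j]. -/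
/-!
With the prefix sums `C`, `S (a + 1) b = C b - C a`. For `1 ≤ a < b` with `b` in the range `[i, j]`,
`C b - C a ≤ D x` by strong induction on `b`. If some `c` with `a ≤ c < b` has `C b ≤ C c`, then
either `c = a` and the difference is nonpositive, or `b` may be replaced by `c`. Otherwise `LV b < a`,
so `a` lies in the window over which `P b` minimizes `C`, and
`C b - C a ≤ C b - C (P b) = D b ≤ D x`. The value `a = 0`, which no window contains, is reduced to
`a = 1` because `A 1 = 0` gives `C 0 = C 1`.
-/

theorem sum_Icc_eq_prefix_sub (A : ℕ → ℝ) {a b : ℕ} (hab : a ≤ b) :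
    ∑ k ∈ Finset.Icc (a + 1) b, A k
      = ∑ k ∈ Finset.Icc 1 b, A k - ∑ k ∈ Finset.Icc 1 a, A k := by
  induction b, hab using Nat.le_induction with
  | base => simp
  | succ b hab ih =>
    rw [Finset.sum_Icc_succ_top (by omega), Finset.sum_Icc_succ_top (by omega), ih]
    ring

theorem stmt_2
    (n : ℕ) (hn : 1 ≤ n)
    (A : ℕ → ℝ) (hA1 : A 1 = 0)
    (S : ℕ → ℕ → ℝ) (hS : ∀ i j : ℕ, S i j = ∑ k ∈ Finset.Icc i j, A k)
    (C : ℕ → ℝ) (hC : ∀ j : ℕ, C j = S 1 j)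
    (LV : ℕ → ℕ)
    (hLV : ∀ i : ℕ, 1 ≤ i → i ≤ n →
      LV i < i ∧ (1 ≤ LV i → C i ≤ C (LV i)) ∧
      (∀ j : ℕ, LV i < j → j < i → C j < C i))
    (P : ℕ → ℕ)
    (hP : ∀ i : ℕ, 1 ≤ i → i ≤ n →
      LV i + 1 ≤ P i ∧ P i ≤ i ∧
      (∀ k : ℕ, LV i + 1 ≤ k → k ≤ i → C (P i) ≤ C k) ∧
      (∀ k : ℕ, P i < k → k ≤ i → C (P i) < C k))
    (D : ℕ → ℝ)
    (hD : ∀ i : ℕ, 1 ≤ i → i ≤ n →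
      D i = if P i < i then S (P i + 1) i else 0)
    (i j x : ℕ) (h1i : 1 ≤ i) (hij : i ≤ j) (hjn : j ≤ n)
    (hix : i ≤ x) (hxj : x ≤ j)
    (hmax : ∀ k : ℕ, i ≤ k → k ≤ j → D k ≤ D x)
    (hcand : P x < x) (hfit : i ≤ P x + 1)
    :
    ∀ i' j' : ℕ, i ≤ i' → i' ≤ j' → j' ≤ j → S i' j' ≤ S (P x + 1) x := by
  have hSC : ∀ a b : ℕ, a ≤ b → S (a + 1) b = C b - C a := by
    intro a b hab
    rw [hC, hC, hS, hS, hS, sum_Icc_eq_prefix_sub A hab]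
  -- The defining formula for `D` without the case split: both sides vanish when `P b = b`.
  have hDC : ∀ b : ℕ, 1 ≤ b → b ≤ n → D b = C b - C (P b) := by
    intro b hb hbn
    obtain ⟨-, hPb, -, -⟩ := hP b hb hbn
    rw [hD b hb hbn]
    split_ifs with h
    · exact hSC _ _ hPb
    · have : P b = b := by omega
      rw [this, sub_self]
  have hDx : D x = S (P x + 1) x := by
    rw [hD x (by omega) (by omega), if_pos hcand]
  have hDx_nonneg : 0 ≤ D x := by
    have hpos := (hP x (by omega) (by omega)).2.2.2 x hcand le_rfl
    rw [hDC x (by omega) (by omega)]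
    linarith
  have key : ∀ b a : ℕ, 1 ≤ a → i ≤ a + 1 → a < b → b ≤ j → C b - C a ≤ D x := by
    intro b
    induction b using Nat.strong_induction_on with
    | _ b ih =>
      intro a ha hia hab hbj
      by_cases hex : ∃ c, a ≤ c ∧ c < b ∧ C b ≤ C c
      · obtain ⟨c, hac, hcb, hle⟩ := hex
        rcases hac.eq_or_lt with rfl | hac
        · linarith
        · linarith [ih c hcb a ha hia hac (by omega)]
      · obtain ⟨hlt, hge, -⟩ := hLV b (by omega) (by omega)
        have hLVa : LV b < a := by
          by_contra! h
          exact hex ⟨LV b, h, hlt, hge (by omega)⟩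
        have hmin := (hP b (by omega) (by omega)).2.2.1 a hLVa hab.le
        have hDb := hmax b (by omega) hbj
        rw [hDC b (by omega) (by omega)] at hDb
        linarith
  intro i' j' hi' hij' hj'
  obtain ⟨a, rfl⟩ : ∃ a, i' = a + 1 := ⟨i' - 1, by omega⟩
  rw [← hDx, hSC a j' (by omega)]
  rcases Nat.eq_zero_or_pos a with rfl | ha
  · have hC01 : C 0 = C 1 := by
      simp [hC, hS, hA1]
    rw [hC01]
    rcases hij'.eq_or_lt with rfl | h
    · simpa using hDx_nonneg
    · exact key j' 1 le_rfl (by omega) (by omega) hj'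
  · exact key j' a ha hi' hij' hj'
end

section
/- Let 1 ≤ i ≤ j ≤ n, let x be the rightmost maximizer of D on [i,j] (i.e., i ≤ x ≤ j, D(x) ≥ D(k) for all i ≤ k ≤ j, and D(x) > D(k) for all x < k ≤ j), and suppose P(x)+1 < i and x < j. Let y be the rightmost maximizer of D on [x+1, j]. Then x < P(y) ≤ y. -/
/-!
Since `D k = C k - C (P k)`, the value `D k` is the rise of `C` from its minimum on the window
`LV k + 1, …, k`. Suppose `P y ≤ x < y`. Then `x` lies in the window of `y`, so
`C x < C y`. If the window of `y` contains `P x`, then `C (P y) ≤ C (P x)`, whence `D x < D y`,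
against the choice of `x`. Otherwise `LV x < P x ≤ LV y < x`, so `LV y` lies in the window of `x`
and `C (LV y) < C x < C y`, against `C y ≤ C (LV y)`.
-/

theorem stmt_3
    (n : ℕ) (hn : 1 ≤ n)
    (A : ℕ → ℝ) (hA1 : A 1 = 0)
    (S : ℕ → ℕ → ℝ) (hS : ∀ i j : ℕ, S i j = ∑ k ∈ Finset.Icc i j, A k)
    (C : ℕ → ℝ) (hC : ∀ j : ℕ, C j = S 1 j)
    (LV : ℕ → ℕ)
    (hLV : ∀ i : ℕ, 1 ≤ i → i ≤ n →
      LV i < i ∧ (1 ≤ LV i → C i ≤ C (LV i)) ∧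
      (∀ j : ℕ, LV i < j → j < i → C j < C i))
    (P : ℕ → ℕ)
    (hP : ∀ i : ℕ, 1 ≤ i → i ≤ n →
      LV i + 1 ≤ P i ∧ P i ≤ i ∧
      (∀ k : ℕ, LV i + 1 ≤ k → k ≤ i → C (P i) ≤ C k) ∧
      (∀ k : ℕ, P i < k → k ≤ i → C (P i) < C k))
    (D : ℕ → ℝ)
    (hD : ∀ i : ℕ, 1 ≤ i → i ≤ n →
      D i = if P i < i then S (P i + 1) i else 0)
    (i j x y : ℕ) (h1i : 1 ≤ i) (hij : i ≤ j) (hjn : j ≤ n)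
    (hix : i ≤ x) (hxj : x ≤ j)
    (hxmax : ∀ k : ℕ, i ≤ k → k ≤ j → D k ≤ D x)
    (hxright : ∀ k : ℕ, x < k → k ≤ j → D k < D x)
    (hout : P x + 1 < i) (hxltj : x < j)
    (hxy : x + 1 ≤ y) (hyj : y ≤ j)
    (hymax : ∀ k : ℕ, x + 1 ≤ k → k ≤ j → D k ≤ D y)
    (hyright : ∀ k : ℕ, y < k → k ≤ j → D k < D y)
    :
    x < P y ∧ P y ≤ y := by
  have hDC : ∀ k, 1 ≤ k → k ≤ n → D k = C k - C (P k) := by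
    intro k hk hkn
    obtain ⟨-, hPk, -, -⟩ := hP k hk hkn
    rw [hD k hk hkn]
    split_ifs with h
    · have hIoc : ∀ a b : ℕ, Finset.Icc (a + 1) b = Finset.Ioc a b := by
        intro a b
        ext m
        simp [Nat.succ_le_iff]
      have hsum := Finset.sum_Ioc_consecutive A (Nat.zero_le (P k)) hPk
      rw [← hIoc, ← hIoc, ← hIoc] at hsum
      simp only [zero_add] at hsum
      rw [hC, hC, hS, hS, hS]
      linarith
    · rw [show P k = k by omega, sub_self]
  obtain ⟨-, -, hxvis⟩ := hLV x (by omega) (by omega)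
  obtain ⟨-, hyLV, hyvis⟩ := hLV y (by omega) (by omega)
  obtain ⟨hxP, hPx, -, -⟩ := hP x (by omega) (by omega)
  obtain ⟨hyP, hPy, hymin, -⟩ := hP y (by omega) (by omega)
  refine ⟨?_, hPy⟩
  by_contra hcon
  have hCxy : C x < C y := hyvis x (by omega) (by omega)
  by_cases hwin : LV y < P x
  · have hlow : C (P y) ≤ C (P x) := hymin (P x) hwin (by omega)
    have hDlt := hxright y (by omega) hyj
    rw [hDC y (by omega) (by omega), hDC x (by omega) (by omega)] at hDlt
    linarith
  · have hhigh : C y ≤ C (LV y) := hyLV (by omega)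
    have hlow : C (LV y) < C x := hxvis (LV y) (by omega) (by omega)
    linarith
end

section
/- Let 1 ≤ i ≤ j ≤ n, let x be the rightmost maximizer of D on [i,j] (i.e., i ≤ x ≤ j, D(x) ≥ D(k) for all i ≤ k ≤ j, and D(x) > D(k) for all x < k ≤ j), and suppose P(x)+1 < i and x < j. Let y be the rightmost maximizer of D on [x+1, j], and let t be the rightmost minimizer of C on [i−1, x−1] (i.e., i−1 ≤ t ≤ x−1, C(t) ≤ C(k) for all i−1 ≤ k ≤ x−1, and C(t) < C(k) for all t < k ≤ x−1). Then the maximum of S(i',j') over all i ≤ i' ≤ j' ≤ j equals max( S(t+1, x), S(P(y)+1, y) ); that is, a maximum-sum segment of A on [i,j] is [t+1, x] or [P(y)+1, y]. -/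
/-!
In terms of the prefix sums `C`, one has `S a b = C b - C (a - 1)` and `D k = C k - C (P k)`.

The key fact is that `LV b ≥ x` for every `b` in `(x, j]`. If `LV b < x`, then `C x < C b`. Either
`LV b < P x`, so `C (P b) ≤ C (P x)` and `D b > D x`, which is impossible; or
`P x ≤ LV b < x`, so that `C (LV b) < C x < C b ≤ C (LV b)`. Descending along `LV` then gives
`C b ≤ C x` for all such `b`, and `C b ≤ C x` for `b` in `[i, x]` holds because
`LV x < P x < i`. Hence a segment with left cut `a = i' - 1 < x` has sum at most `C x - C t`.
For a left cut `a ≥ x`, descending along `LV` from `b` until `LV b ≤ a` shows that the sum is at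
most `max 0 (D b') ≤ D y` for some `b'` in `(x, j]`. Both values are attained inside `[i, j]`
since `P y > LV y ≥ x`; if `P y = y`, the second value is `0`, which is less than
`S (t + 1) x`.
-/

theorem stmt_4
    (n : ℕ) (hn : 1 ≤ n)
    (A : ℕ → ℝ) (hA1 : A 1 = 0)
    (S : ℕ → ℕ → ℝ) (hS : ∀ i j : ℕ, S i j = ∑ k ∈ Finset.Icc i j, A k)
    (C : ℕ → ℝ) (hC : ∀ j : ℕ, C j = S 1 j)
    (LV : ℕ → ℕ)
    (hLV : ∀ i : ℕ, 1 ≤ i → i ≤ n →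
      LV i < i ∧ (1 ≤ LV i → C i ≤ C (LV i)) ∧
      (∀ j : ℕ, LV i < j → j < i → C j < C i))
    (P : ℕ → ℕ)
    (hP : ∀ i : ℕ, 1 ≤ i → i ≤ n →
      LV i + 1 ≤ P i ∧ P i ≤ i ∧
      (∀ k : ℕ, LV i + 1 ≤ k → k ≤ i → C (P i) ≤ C k) ∧
      (∀ k : ℕ, P i < k → k ≤ i → C (P i) < C k))
    (D : ℕ → ℝ)
    (hD : ∀ i : ℕ, 1 ≤ i → i ≤ n →
      D i = if P i < i then S (P i + 1) i else 0)
    (i j x y : ℕ) (h1i : 1 ≤ i) (hij : i ≤ j) (hjn : j ≤ n)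
    (hix : i ≤ x) (hxj : x ≤ j)
    (hxmax : ∀ k : ℕ, i ≤ k → k ≤ j → D k ≤ D x)
    (hxright : ∀ k : ℕ, x < k → k ≤ j → D k < D x)
    (hout : P x + 1 < i) (hxltj : x < j)
    (hxy : x + 1 ≤ y) (hyj : y ≤ j)
    (hymax : ∀ k : ℕ, x + 1 ≤ k → k ≤ j → D k ≤ D y)
    (hyright : ∀ k : ℕ, y < k → k ≤ j → D k < D y)
    (t : ℕ) (hti : i - 1 ≤ t) (htx : t ≤ x - 1)
    (htmin : ∀ k : ℕ, i - 1 ≤ k → k ≤ x - 1 → C t ≤ C k)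
    (htright : ∀ k : ℕ, t < k → k ≤ x - 1 → C t < C k)
    :
    (∀ i' j' : ℕ, i ≤ i' → i' ≤ j' → j' ≤ j →
        S i' j' ≤ max (S (t + 1) x) (S (P y + 1) y)) ∧
    (∃ i' j' : ℕ, i ≤ i' ∧ i' ≤ j' ∧ j' ≤ j ∧
        S i' j' = max (S (t + 1) x) (S (P y + 1) y)) := by
  have hC0 : ∀ j, C j = ∑ k ∈ Finset.Icc 1 j, A k := fun j => by rw [hC, hS]
  have hSC : ∀ a b : ℕ, a ≤ b → S (a + 1) b = C b - C a := by
    intro a b hab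
    induction b, hab using Nat.le_induction with
    | base => simp [hS]
    | succ b hab ih =>
      have e1 : S (a + 1) (b + 1) = S (a + 1) b + A (b + 1) := by
        rw [hS, hS, Finset.sum_Icc_succ_top (by omega)]
      have e2 : C (b + 1) = C b + A (b + 1) := by
        rw [hC0, hC0, Finset.sum_Icc_succ_top (by omega)]
      linarith
  have hDC : ∀ k, 1 ≤ k → k ≤ n → D k = C k - C (P k) := by
    intro k h1 h2
    rw [hD k h1 h2]
    split_ifs with h
    · exact hSC _ _ h.le
    · have : P k = k := by have := (hP k h1 h2).2.1; omega
      simp [this]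
  obtain ⟨hx1, -, hx3⟩ := hLV x (by omega) (by omega)
  obtain ⟨px1, px2, -, -⟩ := hP x (by omega) (by omega)
  have hDx := hDC x (by omega) (by omega)
  have key : ∀ b, x < b → b ≤ j → x ≤ LV b := by
    intro b hb hbj
    by_contra! hlt
    obtain ⟨-, b2, b3⟩ := hLV b (by omega) (by omega)
    obtain ⟨-, -, pb3, -⟩ := hP b (by omega) (by omega)
    have hDb := hDC b (by omega) (by omega)
    have hxb := b3 x hlt hb
    by_cases hc : LV b < P x
    · have := pb3 (P x) (by omega) (by omega)
      have := hxright b hb hbj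
      linarith
    · have := b2 (by omega)
      have := hx3 (LV b) (by omega) hlt
      linarith
  have hCx : ∀ b, x < b → b ≤ j → C b ≤ C x := by
    intro b
    induction b using Nat.strong_induction_on with
    | _ b ih =>
      intro hb hbj
      obtain ⟨b1, b2, -⟩ := hLV b (by omega) (by omega)
      have hk := key b hb hbj
      have h2 := b2 (by omega)
      rcases hk.eq_or_lt with h | h
      · rwa [← h] at h2
      · exact h2.trans (ih _ b1 h (by omega))
  have hCx' : ∀ b, i - 1 ≤ b → b < x → C b < C x := fun b h1 h2 => hx3 b (by omega) h2
  have hPy := hP y (by omega) (by omega)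
  have hDy := hDC y (by omega) (by omega)
  have hDy0 : 0 ≤ D y := by
    have := hPy.2.2.1 y (by omega) le_rfl
    linarith
  have hright : ∀ a b, x ≤ a → a < b → b ≤ j → C b - C a ≤ D y := by
    intro a b ha
    induction b using Nat.strong_induction_on with
    | _ b ih =>
      intro hab hbj
      obtain ⟨b1, b2, -⟩ := hLV b (by omega) (by omega)
      have hk := key b (by omega) hbj
      have h2 := b2 (by omega)
      rcases lt_trichotomy a (LV b) with h | h | h
      · have := ih _ b1 h (by omega)
        linarith
      · rw [← h] at h2
        linarith
      · have := (hP b (by omega) (by omega)).2.2.1 a h (by omega)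
        have := hDC b (by omega) (by omega)
        have := hymax b (by omega) hbj
        linarith
  have hky := key y (by omega) hyj
  have e1 : S (t + 1) x = C x - C t := hSC _ _ (by omega)
  have e2 : S (P y + 1) y = D y := by rw [hDy]; exact hSC _ _ hPy.2.1
  refine ⟨fun i' b hi' hib hbj => ?_, ?_⟩
  · obtain ⟨a, rfl⟩ : ∃ a, i' = a + 1 := ⟨i' - 1, by omega⟩
    rw [hSC a b (by omega), e1, e2]
    by_cases hax : x ≤ a
    · exact le_max_of_le_right (hright a b hax (by omega) hbj)
    · apply le_max_of_le_left
      have hta := htmin a (by omega) (by omega)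
      have hbx : C b ≤ C x := by
        rcases lt_trichotomy b x with h | h | h
        · exact (hCx' b (by omega) h).le
        · rw [h]
        · exact hCx b h hbj
      linarith
  · rcases le_total (S (P y + 1) y) (S (t + 1) x) with h | h
    · exact ⟨t + 1, x, by omega, by omega, hxj, (max_eq_left h).symm⟩
    · -- `S (t + 1) x > 0` excludes the empty segment `P y = y`, for which `D y = 0`.
      have htpos := hCx' t hti (by omega)
      have hne : P y ≠ y := by
        intro hp
        rw [hp] at hDy
        linarith
      exact ⟨P y + 1, y, by omega, by omega, hyj, (max_eq_right h).symm⟩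
end

section
/- For all integers i, j with 1 ≤ i < j ≤ n, it is not the case that P(i) < P(j) ≤ i. Consequently, the ranges [P(i), i] and [P(j), j] are either nested or disjoint for all 1 ≤ i < j ≤ n (the nesting property). -/
/-!
Suppose `P i < P j ≤ i`. As `P i` is the rightmost minimum of `C` on the window of `i`,
`C (P i) < C (P j)`. If `P i` lay in the window `(LV j, j]` of `j`, this would contradict the
minimality of `C (P j)` there. Otherwise `P i ≤ LV j < P j ≤ i`, so `LV j` lies in the window of
`i` and `i` in the window of `j`, whence `C (LV j) < C i < C j ≤ C (LV j)`.
-/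

theorem stmt_5
    (n : ℕ) (hn : 1 ≤ n)
    (A : ℕ → ℝ) (hA1 : A 1 = 0)
    (S : ℕ → ℕ → ℝ) (hS : ∀ i j : ℕ, S i j = ∑ k ∈ Finset.Icc i j, A k)
    (C : ℕ → ℝ) (hC : ∀ j : ℕ, C j = S 1 j)
    (LV : ℕ → ℕ)
    (hLV : ∀ i : ℕ, 1 ≤ i → i ≤ n →
      LV i < i ∧ (1 ≤ LV i → C i ≤ C (LV i)) ∧
      (∀ j : ℕ, LV i < j → j < i → C j < C i))
    (P : ℕ → ℕ)
    (hP : ∀ i : ℕ, 1 ≤ i → i ≤ n →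
      LV i + 1 ≤ P i ∧ P i ≤ i ∧
      (∀ k : ℕ, LV i + 1 ≤ k → k ≤ i → C (P i) ≤ C k) ∧
      (∀ k : ℕ, P i < k → k ≤ i → C (P i) < C k))
    (D : ℕ → ℝ)
    (hD : ∀ i : ℕ, 1 ≤ i → i ≤ n →
      D i = if P i < i then S (P i + 1) i else 0)
    :
    ∀ i j : ℕ, 1 ≤ i → i < j → j ≤ n →
      ¬(P i < P j ∧ P j ≤ i) ∧ (P j ≤ P i ∨ i < P j) := by
  intro i j hi hij hj
  obtain ⟨-, -, hLi⟩ := hLV i hi (by omega)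
  obtain ⟨-, hLj, hLj'⟩ := hLV j (by omega) hj
  obtain ⟨hPi, -, -, hPi'⟩ := hP i hi (by omega)
  obtain ⟨hPj, -, hPj', -⟩ := hP j (by omega) hj
  have key : ¬(P i < P j ∧ P j ≤ i) := by
    rintro ⟨h1, h2⟩
    have hlt : C (P i) < C (P j) := hPi' _ h1 h2
    by_cases h : LV j < P i
    · exact absurd (hPj' (P i) (by omega) (by omega)) (not_le.mpr hlt)
    · have a : C j ≤ C (LV j) := hLj (by omega)
      have b : C (LV j) < C i := hLi _ (by omega) (by omega)
      have c : C i < C j := hLj' i (by omega) hij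
      linarith
  exact ⟨key, by omega⟩
end

section
/- Let 1 ≤ i ≤ j ≤ n, let x be the rightmost maximizer of D on [i,j] (i.e., i ≤ x ≤ j, D(x) ≥ D(k) for all i ≤ k ≤ j, and D(x) > D(k) for all x < k ≤ j), and suppose P(x)+1 < i and x < j. Let y be the rightmost maximizer of D on [x+1, j], and let t be the rightmost minimizer of C on [i−1, x−1]. If P(y) = y or Q(y) ≥ t, then S(i',j') ≤ S(t+1, x) for all i ≤ i' ≤ j' ≤ j (so [t+1, x] is a maximum-sum segment of A on [i,j]); otherwise (i.e., if P(y) < y and Q(y) < t), S(i',j') ≤ S(P(y)+1, y) for all i ≤ i' ≤ j' ≤ j (so [P(y)+1, y] is a maximum-sum segment of A on [i,j]). -/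
/-!
In terms of prefix sums, `S (a + 1) b = C b - C a` and `D k = C k - C (P k)`, so the claim concerns
the largest difference `C b - C a` over `i - 1 ≤ a < b ≤ j`.

Since `x` is the rightmost maximizer of `D`, no index in `(x, j]` has a prefix sum above `C x`: at
the first such index `k`, the window `(LV k, k]` would contain the window of `x`, giving
`D k ≥ D x` (`prefix_le_of_right`). As `i - 1 > P x > LV x`, the same bound `C b ≤ C x` holds on
`[i - 1, x]`. Hence differences starting before `x` are at most `C x - C t`. Differences starting at
or after `x` are at most `D y`, because every difference is dominated by some `D k` with `k` inside
the segment (`exists_sub_le_window`). Moreover `C y ≤ C x` forces `P y > x`, so `(P y, y)` is itself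
an admissible segment, and the maximum is `max (C x - C t) (D y)`.

The left sibling `Q y` decides which of the two is larger. If `t ≤ Q y`, it is the left end of an
admissible segment with sum above `D y`; that segment must start before `x`, whence
`D y < C x - C t`. If `Q y < t`, then the segment `(t, x)` is among those whose sum is at most `D y`.
-/

theorem sum_Icc_succ_eq_prefix_sub (A : ℕ → ℝ) (a b : ℕ) (hab : a ≤ b) :
    ∑ k ∈ Finset.Icc (a + 1) b, A k
      = ∑ k ∈ Finset.Icc 1 b, A k - ∑ k ∈ Finset.Icc 1 a, A k := by
  have h := Finset.sum_Ioc_consecutive A (Nat.zero_le a) hab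
  have e : ∀ u v : ℕ, Finset.Icc (u + 1) v = Finset.Ioc u v := by
    intro u v
    ext m
    simp only [Finset.mem_Icc, Finset.mem_Ioc]
    omega
  rw [e a b, ← zero_add 1, e 0 b, e 0 a]
  linarith

/-- If the window of `b` does not reach `a`, then replacing `b` by `LV b` does not decrease
`C b - C a`; iterating, one reaches an index whose window contains `a`, or `a` itself, where the difference is
`0`. -/
theorem exists_sub_le_window (n : ℕ) (C : ℕ → ℝ) (LV P : ℕ → ℕ)
    (hLV : ∀ i : ℕ, 1 ≤ i → i ≤ n →
      LV i < i ∧ (1 ≤ LV i → C i ≤ C (LV i)) ∧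
      (∀ j : ℕ, LV i < j → j < i → C j < C i))
    (hP : ∀ i : ℕ, 1 ≤ i → i ≤ n →
      LV i + 1 ≤ P i ∧ P i ≤ i ∧
      (∀ k : ℕ, LV i + 1 ≤ k → k ≤ i → C (P i) ≤ C k) ∧
      (∀ k : ℕ, P i < k → k ≤ i → C (P i) < C k))
    (a : ℕ) (ha : 1 ≤ a) (b : ℕ) (hab : a < b) (hbn : b ≤ n) :
    ∃ k : ℕ, a < k ∧ k ≤ b ∧ C b - C a ≤ C k - C (P k) := by
  induction b using Nat.strong_induction_on with
  | _ b ih =>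
    obtain ⟨hlt, hge, -⟩ := hLV b (by omega) hbn
    obtain ⟨-, -, hmin, -⟩ := hP b (by omega) hbn
    rcases lt_trichotomy (LV b) a with h | h | h
    · exact ⟨b, hab, le_rfl, by linarith [hmin a (by omega) hab.le]⟩
    · have h1 := hge (by omega)
      rw [h] at h1
      exact ⟨b, hab, le_rfl, by linarith [hmin b (by omega) le_rfl]⟩
    · obtain ⟨k, hk1, hk2, hk3⟩ := ih (LV b) hlt h (by omega)
      exact ⟨k, hk1, by omega, by linarith [hge (by omega)]⟩

/-- If `C k - C (P k)` is strictly smaller at every `k` in `(x, j]` than at `x`, then prefix sums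
on `(x, j]` do not exceed `C x`. -/
theorem prefix_le_of_right (n : ℕ) (C : ℕ → ℝ) (LV P : ℕ → ℕ)
    (hLV : ∀ i : ℕ, 1 ≤ i → i ≤ n →
      LV i < i ∧ (1 ≤ LV i → C i ≤ C (LV i)) ∧
      (∀ j : ℕ, LV i < j → j < i → C j < C i))
    (hP : ∀ i : ℕ, 1 ≤ i → i ≤ n →
      LV i + 1 ≤ P i ∧ P i ≤ i ∧
      (∀ k : ℕ, LV i + 1 ≤ k → k ≤ i → C (P i) ≤ C k) ∧
      (∀ k : ℕ, P i < k → k ≤ i → C (P i) < C k))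
    (x j : ℕ) (hx : 1 ≤ x) (hjn : j ≤ n)
    (hright : ∀ k : ℕ, x < k → k ≤ j → C k - C (P k) < C x - C (P x))
    (k : ℕ) (hxk : x < k) (hkj : k ≤ j) : C k ≤ C x := by
  induction k using Nat.strong_induction_on with
  | _ k ih =>
    by_contra! hcon
    obtain ⟨hklt, hkge, -⟩ := hLV k (by omega) (by omega)
    obtain ⟨-, -, hxbelow⟩ := hLV x hx (by omega)
    obtain ⟨hPx1, hPx2, -, -⟩ := hP x hx (by omega)
    obtain ⟨-, -, hkmin, -⟩ := hP k (by omega) (by omega)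
    -- The window of `k` contains the window of `x`.
    have hle : LV k ≤ LV x := by
      by_contra! hlv
      have h1 := hkge (by omega)
      rcases lt_trichotomy (LV k) x with h | h | h
      · linarith [hxbelow (LV k) hlv h]
      · rw [h] at h1
        linarith
      · linarith [ih (LV k) hklt h (by omega)]
    linarith [hkmin (P x) (by omega) (by omega), hright k hxk hkj]

theorem stmt_6
    (n : ℕ) (hn : 1 ≤ n)
    (A : ℕ → ℝ) (hA1 : A 1 = 0)
    (S : ℕ → ℕ → ℝ) (hS : ∀ i j : ℕ, S i j = ∑ k ∈ Finset.Icc i j, A k)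
    (C : ℕ → ℝ) (hC : ∀ j : ℕ, C j = S 1 j)
    (LV : ℕ → ℕ)
    (hLV : ∀ i : ℕ, 1 ≤ i → i ≤ n →
      LV i < i ∧ (1 ≤ LV i → C i ≤ C (LV i)) ∧
      (∀ j : ℕ, LV i < j → j < i → C j < C i))
    (P : ℕ → ℕ)
    (hP : ∀ i : ℕ, 1 ≤ i → i ≤ n →
      LV i + 1 ≤ P i ∧ P i ≤ i ∧
      (∀ k : ℕ, LV i + 1 ≤ k → k ≤ i → C (P i) ≤ C k) ∧
      (∀ k : ℕ, P i < k → k ≤ i → C (P i) < C k))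
    (D : ℕ → ℝ)
    (hD : ∀ i : ℕ, 1 ≤ i → i ≤ n →
      D i = if P i < i then S (P i + 1) i else 0)
    (Q : ℕ → ℕ)
    (hQ : ∀ x : ℕ, 1 ≤ x → x ≤ n →
      (P x = x → Q x = 0) ∧
      (P x < x →
        (1 ≤ Q x →
          Q x < P x ∧
          ∃ l' : ℕ, Q x + 1 ≤ l' ∧ l' ≤ P x ∧ S (P x + 1) x < S (Q x + 1) l') ∧
        (∀ l : ℕ, Q x < l → l < P x → ∀ l' : ℕ, l + 1 ≤ l' → l' ≤ P x →
          S (l + 1) l' ≤ S (P x + 1) x)))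
    (i j x y : ℕ) (h1i : 1 ≤ i) (hij : i ≤ j) (hjn : j ≤ n)
    (hix : i ≤ x) (hxj : x ≤ j)
    (hxmax : ∀ k : ℕ, i ≤ k → k ≤ j → D k ≤ D x)
    (hxright : ∀ k : ℕ, x < k → k ≤ j → D k < D x)
    (hout : P x + 1 < i) (hxltj : x < j)
    (hxy : x + 1 ≤ y) (hyj : y ≤ j)
    (hymax : ∀ k : ℕ, x + 1 ≤ k → k ≤ j → D k ≤ D y)
    (hyright : ∀ k : ℕ, y < k → k ≤ j → D k < D y)
    (t : ℕ) (hti : i - 1 ≤ t) (htx : t ≤ x - 1)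
    (htmin : ∀ k : ℕ, i - 1 ≤ k → k ≤ x - 1 → C t ≤ C k)
    (htright : ∀ k : ℕ, t < k → k ≤ x - 1 → C t < C k)
    :
    ((P y = y ∨ t ≤ Q y) →
        ∀ i' j' : ℕ, i ≤ i' → i' ≤ j' → j' ≤ j → S i' j' ≤ S (t + 1) x) ∧
    ((P y < y ∧ Q y < t) →
        ∀ i' j' : ℕ, i ≤ i' → i' ≤ j' → j' ≤ j → S i' j' ≤ S (P y + 1) y) := by
  have hSC : ∀ a b : ℕ, a ≤ b → S (a + 1) b = C b - C a := by
    intro a b hab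
    rw [hC, hC, hS, hS, hS]
    exact sum_Icc_succ_eq_prefix_sub A a b hab
  have hDC : ∀ k : ℕ, 1 ≤ k → k ≤ n → D k = C k - C (P k) := by
    intro k hk1 hkn
    rw [hD k hk1 hkn]
    split_ifs with h
    · exact hSC _ _ h.le
    · have e : P k = k := by
        have := (hP k hk1 hkn).2.1
        omega
      rw [e, sub_self]
  have hright := prefix_le_of_right n C LV P hLV hP x j (by omega) hjn (by
    intro k hk1 hk2
    rw [← hDC k (by omega) (by omega), ← hDC x (by omega) (by omega)]
    exact hxright k hk1 hk2)
  obtain ⟨-, -, hxbelow⟩ := hLV x (by omega) (by omega)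
  obtain ⟨hPx1, -, -, -⟩ := hP x (by omega) (by omega)
  have hCx : ∀ b : ℕ, i - 1 ≤ b → b ≤ j → C b ≤ C x := by
    intro b hb1 hb2
    rcases lt_trichotomy b x with h | h | h
    · exact (hxbelow b (by omega) h).le
    · rw [h]
    · exact hright b h hb2
  have hleft : ∀ a b : ℕ, i - 1 ≤ a → a < x → a < b → b ≤ j → C b - C a ≤ C x - C t := by
    intro a b ha hax hab hb
    linarith [hCx b (by omega) hb, htmin a ha (by omega)]
  have hafter : ∀ a b : ℕ, x ≤ a → a < b → b ≤ j → C b - C a ≤ D y := by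
    intro a b ha hab hb
    obtain ⟨k, hk1, hk2, hk3⟩ :=
      exists_sub_le_window n C LV P hLV hP a (by omega) b hab (by omega)
    rw [← hDC k (by omega) (by omega)] at hk3
    exact hk3.trans (hymax k (by omega) (by omega))
  have htx0 : C t ≤ C x := hCx t hti (by omega)
  obtain ⟨-, -, hybelow⟩ := hLV y (by omega) (by omega)
  obtain ⟨hPy1, hPy2, -, -⟩ := hP y (by omega) (by omega)
  -- `C y ≤ C x` makes `x` visible from `y`, so the window of `y` starts after `x`.
  have hPyx : x < P y := by
    by_contra! h
    linarith [hybelow x (by omega) (by omega), hright y (by omega) hyj]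
  have hDy := hDC y (by omega) (by omega)
  constructor
  · intro hcase
    have hDle : D y ≤ C x - C t := by
      by_cases hPy : P y = y
      · rw [hDy, hPy]
        linarith
      · have htQ : t ≤ Q y := hcase.resolve_left hPy
        have hQpos : 1 ≤ Q y := by omega
        obtain ⟨hQP, l', hl1, hl2, hl3⟩ :=
          ((hQ y (by omega) (by omega)).2 (by omega)).1 hQpos
        rw [hSC _ _ hPy2, hSC (Q y) l' (by omega), ← hDy] at hl3
        -- A segment starting at or after `x` cannot beat `D y`.
        have hQx : Q y < x := by
          by_contra! h
          linarith [hafter (Q y) l' h (by omega) (by omega)]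
        linarith [hleft (Q y) l' (by omega) hQx (by omega) (by omega)]
    intro i' j' hi' hij' hj'
    obtain ⟨a, rfl⟩ : ∃ a, i' = a + 1 := ⟨i' - 1, by omega⟩
    rw [hSC a j' (by omega), hSC t x (by omega)]
    rcases lt_or_ge a x with h | h
    · exact hleft a j' (by omega) h (by omega) hj'
    · exact (hafter a j' h (by omega) hj').trans hDle
  · rintro ⟨hPy, hQt⟩ i' j' hi' hij' hj'
    have hle : C x - C t ≤ D y := by
      have h := ((hQ y (by omega) (by omega)).2 hPy).2 t hQt (by omega) x (by omega) hPyx.le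
      rwa [hSC t x (by omega), hSC _ _ hPy2, ← hDy] at h
    obtain ⟨a, rfl⟩ : ∃ a, i' = a + 1 := ⟨i' - 1, by omega⟩
    rw [hSC a j' (by omega), hSC _ _ hPy2, ← hDy]
    rcases lt_or_ge a x with h | h
    · exact (hleft a j' (by omega) h (by omega) hj').trans hle
    · exact hafter a j' h (by omega) hj'
end

section
/- Let 1 ≤ i ≤ j ≤ n, let x be the rightmost maximizer of D on [i,j] (i.e., i ≤ x ≤ j, D(x) ≥ D(k) for all i ≤ k ≤ j, and D(x) > D(k) for all x < k ≤ j), and suppose P(x)+1 < i and x < j. Let y be the rightmost maximizer of D on [x+1, j], and suppose P(y) < y. Then Q(y) ≤ x. -/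
/-!
Since `S (a + 1) b = C b - C a`, one has `D k = C k - C (P k)` for every index `k`.
Suppose `q = Q y > x`. By definition of `Q` there is `l'` with `q < l' ≤ P y` and
`C l' - C q > D y ≥ 0`. Let `k` be the first index after `q` with `C k ≥ C l'`. Every index in
`[q, k)` has a smaller value of `C` than `k`, so `LV k < q`: the window over which `P k`
minimises `C` contains `q`. Hence `D k ≥ C k - C q ≥ C l' - C q > D y`, which contradicts the
maximality of `D y` on `[x + 1, j]`.
-/

theorem sum_Icc_succ_eq_sub (A : ℕ → ℝ) {a b : ℕ} (h : a ≤ b) :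
    ∑ k ∈ Finset.Icc (a + 1) b, A k
      = ∑ k ∈ Finset.Icc 1 b, A k - ∑ k ∈ Finset.Icc 1 a, A k := by
  induction b, h using Nat.le_induction with
  | base => simp
  | succ m hm ih =>
    rw [Finset.sum_Icc_succ_top (by omega), Finset.sum_Icc_succ_top (by omega), ih]
    ring

theorem stmt_7
    (n : ℕ) (hn : 1 ≤ n)
    (A : ℕ → ℝ) (hA1 : A 1 = 0)
    (S : ℕ → ℕ → ℝ) (hS : ∀ i j : ℕ, S i j = ∑ k ∈ Finset.Icc i j, A k)
    (C : ℕ → ℝ) (hC : ∀ j : ℕ, C j = S 1 j)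
    (LV : ℕ → ℕ)
    (hLV : ∀ i : ℕ, 1 ≤ i → i ≤ n →
      LV i < i ∧ (1 ≤ LV i → C i ≤ C (LV i)) ∧
      (∀ j : ℕ, LV i < j → j < i → C j < C i))
    (P : ℕ → ℕ)
    (hP : ∀ i : ℕ, 1 ≤ i → i ≤ n →
      LV i + 1 ≤ P i ∧ P i ≤ i ∧
      (∀ k : ℕ, LV i + 1 ≤ k → k ≤ i → C (P i) ≤ C k) ∧
      (∀ k : ℕ, P i < k → k ≤ i → C (P i) < C k))
    (D : ℕ → ℝ)
    (hD : ∀ i : ℕ, 1 ≤ i → i ≤ n →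
      D i = if P i < i then S (P i + 1) i else 0)
    (Q : ℕ → ℕ)
    (hQ : ∀ x : ℕ, 1 ≤ x → x ≤ n →
      (P x = x → Q x = 0) ∧
      (P x < x →
        (1 ≤ Q x →
          Q x < P x ∧
          ∃ l' : ℕ, Q x + 1 ≤ l' ∧ l' ≤ P x ∧ S (P x + 1) x < S (Q x + 1) l') ∧
        (∀ l : ℕ, Q x < l → l < P x → ∀ l' : ℕ, l + 1 ≤ l' → l' ≤ P x →
          S (l + 1) l' ≤ S (P x + 1) x)))
    (i j x y : ℕ) (h1i : 1 ≤ i) (hij : i ≤ j) (hjn : j ≤ n)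
    (hix : i ≤ x) (hxj : x ≤ j)
    (hxmax : ∀ k : ℕ, i ≤ k → k ≤ j → D k ≤ D x)
    (hxright : ∀ k : ℕ, x < k → k ≤ j → D k < D x)
    (hout : P x + 1 < i) (hxltj : x < j)
    (hxy : x + 1 ≤ y) (hyj : y ≤ j)
    (hymax : ∀ k : ℕ, x + 1 ≤ k → k ≤ j → D k ≤ D y)
    (hyright : ∀ k : ℕ, y < k → k ≤ j → D k < D y)
    (hycand : P y < y)
    :
    Q y ≤ x := by
  have hSC : ∀ a b : ℕ, a ≤ b → S (a + 1) b = C b - C a := by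
    intro a b hab
    rw [hC, hC, hS, hS, hS]
    exact sum_Icc_succ_eq_sub A hab
  have hDC : ∀ k : ℕ, 1 ≤ k → k ≤ n → D k = C k - C (P k) := by
    intro k hk1 hkn
    rw [hD k hk1 hkn]
    split_ifs with h
    · exact hSC _ _ h.le
    · have hPk : P k = k := by have := (hP k hk1 hkn).2.1; omega
      rw [hPk, sub_self]
  by_contra! hq
  obtain ⟨hqP, l', hql, hlP, hlt⟩ := ((hQ y (by omega) (by omega)).2 hycand).1 (by omega)
  rw [hSC _ _ hycand.le, hSC _ _ (by omega), ← hDC y (by omega) (by omega)] at hlt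
  have hDy : 0 ≤ D y := by
    rw [hDC y (by omega) (by omega)]
    have := (hP y (by omega) (by omega)).2.2.2 y hycand le_rfl
    linarith
  -- `k` is the first index after `Q y` at which `C` reaches the level `C l'`.
  classical
  have hex : ∃ k : ℕ, Q y < k ∧ C l' ≤ C k := ⟨l', hql, le_rfl⟩
  obtain ⟨k, ⟨hqk, hCk⟩, hkmin⟩ :
      ∃ k : ℕ, (Q y < k ∧ C l' ≤ C k) ∧ ∀ m : ℕ, Q y < m ∧ C l' ≤ C m → k ≤ m :=
    ⟨Nat.find hex, Nat.find_spec hex, fun m hm => Nat.find_min' hex hm⟩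
  have hkl : k ≤ l' := hkmin l' ⟨hql, le_rfl⟩
  obtain ⟨hLk, hLC, -⟩ := hLV k (by omega) (by omega)
  have hLq : LV k < Q y := by
    by_contra! hge
    have hle := hLC (by omega)
    rcases hge.eq_or_lt with heq | hgt
    · rw [← heq] at hle
      linarith
    · have := hkmin (LV k) ⟨hgt, hCk.trans hle⟩
      omega
  have hPk := (hP k (by omega) (by omega)).2.2.1 (Q y) (by omega) hqk.le
  have hDk := hymax k (by omega) (by omega)
  rw [hDC k (by omega) (by omega)] at hDk
  linarith
end

section
/- Let t, x, x' be indices with 1 ≤ t < x < x' ≤ n such that P(x) = t and P(x') = t (i.e., (t, x) and (t, x') are candidates sharing the same left minimum t). Then S(t+1, x) < S(t+1, x'); equivalently, C(x) < C(x'). -/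
theorem stmt_8
    (n : ℕ) (hn : 1 ≤ n)
    (A : ℕ → ℝ) (hA1 : A 1 = 0)
    (S : ℕ → ℕ → ℝ) (hS : ∀ i j : ℕ, S i j = ∑ k ∈ Finset.Icc i j, A k)
    (C : ℕ → ℝ) (hC : ∀ j : ℕ, C j = S 1 j)
    (LV : ℕ → ℕ)
    (hLV : ∀ i : ℕ, 1 ≤ i → i ≤ n →
      LV i < i ∧ (1 ≤ LV i → C i ≤ C (LV i)) ∧
      (∀ j : ℕ, LV i < j → j < i → C j < C i))
    (P : ℕ → ℕ)
    (hP : ∀ i : ℕ, 1 ≤ i → i ≤ n →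
      LV i + 1 ≤ P i ∧ P i ≤ i ∧
      (∀ k : ℕ, LV i + 1 ≤ k → k ≤ i → C (P i) ≤ C k) ∧
      (∀ k : ℕ, P i < k → k ≤ i → C (P i) < C k))
    (t x x' : ℕ) (h1t : 1 ≤ t) (htx : t < x) (hxx' : x < x') (hx'n : x' ≤ n)
    (hPx : P x = t) (hPx' : P x' = t)
    :
    S (t + 1) x < S (t + 1) x' ∧ C x < C x' := by
  -- `LV x' < P x' = t < x`, so `x` lies strictly between `LV x'` and `x'`.
  have hlt : C x < C x' := by
    have hwin := (hP x' (by omega) hx'n).1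
    exact (hLV x' (by omega) hx'n).2.2 x (by omega) hxx'
  -- Splitting the prefix sum at `t` shows that `S (t + 1) j` and `C j` differ by the constant `C t`.
  have hsplit : ∀ j, t ≤ j → C t + S (t + 1) j = C j := by
    intro j hj
    have hIcc : ∀ a b : ℕ, Finset.Icc (a + 1) b = Finset.Ioc a b := by
      intro a b
      ext k
      simp only [Finset.mem_Icc, Finset.mem_Ioc]
      omega
    rw [hC, hC, hS, hS, hS, hIcc t j, hIcc 0 t, hIcc 0 j]
    exact Finset.sum_Ioc_consecutive A (Nat.zero_le t) hj
  have hx := hsplit x (by omega)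
  have hx' := hsplit x' (by omega)
  exact ⟨by linarith, hlt⟩
end

section
/- Let t, x, x' be indices with 1 ≤ t < x < x' ≤ n such that P(x) = t and P(x') = t (i.e., (t, x) and (t, x') are candidates sharing the same left minimum t). If Q(x') ≥ 1 (the left sibling of (t, x') is defined), then Q(x) ≥ 1 and Q(x) ≥ Q(x'). That is, among candidates sharing the same left endpoint, taken in increasing order of right endpoint, the left siblings are non-increasing, and once a left sibling is undefined all subsequent ones are undefined. -/
/-!
The index `x` lies strictly between `LV x'` and `x'`, so `C x < C x'`; subtracting `C t` gives
`S (t + 1) x < S (t + 1) x'`. Hence the segment starting at `Q x' + 1` whose sum exceeds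
`S (t + 1) x'` also exceeds `S (t + 1) x`, so `Q x'` is admissible in the maximum defining `Q x`.
-/

theorem stmt_9
    (n : ℕ) (hn : 1 ≤ n)
    (A : ℕ → ℝ) (hA1 : A 1 = 0)
    (S : ℕ → ℕ → ℝ) (hS : ∀ i j : ℕ, S i j = ∑ k ∈ Finset.Icc i j, A k)
    (C : ℕ → ℝ) (hC : ∀ j : ℕ, C j = S 1 j)
    (LV : ℕ → ℕ)
    (hLV : ∀ i : ℕ, 1 ≤ i → i ≤ n →
      LV i < i ∧ (1 ≤ LV i → C i ≤ C (LV i)) ∧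
      (∀ j : ℕ, LV i < j → j < i → C j < C i))
    (P : ℕ → ℕ)
    (hP : ∀ i : ℕ, 1 ≤ i → i ≤ n →
      LV i + 1 ≤ P i ∧ P i ≤ i ∧
      (∀ k : ℕ, LV i + 1 ≤ k → k ≤ i → C (P i) ≤ C k) ∧
      (∀ k : ℕ, P i < k → k ≤ i → C (P i) < C k))
    (Q : ℕ → ℕ)
    (hQ : ∀ x : ℕ, 1 ≤ x → x ≤ n →
      (P x = x → Q x = 0) ∧
      (P x < x →
        (1 ≤ Q x →
          Q x < P x ∧
          ∃ l' : ℕ, Q x + 1 ≤ l' ∧ l' ≤ P x ∧ S (P x + 1) x < S (Q x + 1) l') ∧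
        (∀ l : ℕ, Q x < l → l < P x → ∀ l' : ℕ, l + 1 ≤ l' → l' ≤ P x →
          S (l + 1) l' ≤ S (P x + 1) x)))
    (t x x' : ℕ) (h1t : 1 ≤ t) (htx : t < x) (hxx' : x < x') (hx'n : x' ≤ n)
    (hPx : P x = t) (hPx' : P x' = t)
    :
    1 ≤ Q x' → 1 ≤ Q x ∧ Q x' ≤ Q x := by
  intro hQ1
  have split : ∀ j, t ≤ j → C j = C t + S (t + 1) j := by
    intro j hj
    simp only [hC, hS]
    have hIcc : ∀ a b : ℕ, Finset.Icc a b = Finset.Ico a (b + 1) := fun a b => by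
      ext k
      simp [Nat.lt_succ_iff]
    rw [hIcc, hIcc, hIcc]
    exact (Finset.sum_Ico_consecutive A (by omega) (by omega)).symm
  -- `x` lies strictly between `LV x'` and `x'`, because `LV x' < P x' = t < x`.
  have hCx : C x < C x' := by
    have hLVt := (hP x' (by omega) hx'n).1
    exact (hLV x' (by omega) hx'n).2.2 x (by omega) hxx'
  have hS_lt : S (t + 1) x < S (t + 1) x' := by
    linarith [split x (by omega), split x' (by omega)]
  obtain ⟨hQt, l', hl1, hl2, hl3⟩ :=
    ((hQ x' (by omega) hx'n).2 (by omega)).1 hQ1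
  have hmax := ((hQ x (by omega) (by omega)).2 (by omega)).2
  rw [hPx'] at hQt hl2 hl3
  rw [hPx] at hmax
  have hle : Q x' ≤ Q x := by
    by_contra! hlt
    linarith [hmax (Q x') hlt hQt l' hl1 hl2]
  exact ⟨by omega, hle⟩
end

section
/- There do not exist indices x₁, x₂ with 1 ≤ x₁, x₂ ≤ n such that P(x₁) < x₁, P(x₂) < x₂ (both are candidates), Q(x₁) ≥ 1, Q(x₂) ≥ 1 (both left siblings are defined), P(x₁) < P(x₂), and Q(x₁) < Q(x₂) < P(x₁). Consequently the set of edges {(Q(x), P(x)) : 1 ≤ x ≤ n, P(x) < x, Q(x) ≥ 1} (the left-sibling graph) has the nesting property: any two such edges are nested or disjoint. -/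
/-!
Since `S (l+1) m = C m - C l`, everything is about rises of `C`. Write `pᵢ = P xᵢ`, `qᵢ = Q xᵢ` and
`hᵢ = C xᵢ - C pᵢ > 0`, and suppose `q₁ < q₂ < p₁ < p₂`. By maximality of `qᵢ`, no rise of `C` that
starts strictly after `qᵢ`, strictly before `pᵢ`, and ends by `pᵢ` exceeds `hᵢ`; some rise starting
at `q₂` and ending at some `l ≤ p₂` exceeds `h₂`.

* If `p₂ ≤ x₁`, then `C p₁ < C p₂`, so `p₁` lies outside the window of `x₂`. Hence
  `p₁ < LV x₂ < p₂` and the rise from `p₁` to `LV x₂` exceeds `h₂`.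
* If `x₁ < p₂` and `l ≤ p₁`, then the rise from `q₂` to `l` gives `h₂ < h₁`, while the rise from
  `p₁` to `x₁` gives `h₁ ≤ h₂`.
* If `x₁ < p₂` and `p₁ < l`, then comparing the rises from `q₂` and `p₁` to `l` gives
  `C q₂ < C p₁`, so `q₂` lies outside the window of `x₁`. Hence `q₂ < LV x₁ < p₁` and the rise
  from `q₂` to `LV x₁` exceeds `h₁`.

Each case contradicts one of the bounds on rises.
-/

theorem stmt_10
    (n : ℕ) (hn : 1 ≤ n)
    (A : ℕ → ℝ) (hA1 : A 1 = 0)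
    (S : ℕ → ℕ → ℝ) (hS : ∀ i j : ℕ, S i j = ∑ k ∈ Finset.Icc i j, A k)
    (C : ℕ → ℝ) (hC : ∀ j : ℕ, C j = S 1 j)
    (LV : ℕ → ℕ)
    (hLV : ∀ i : ℕ, 1 ≤ i → i ≤ n →
      LV i < i ∧ (1 ≤ LV i → C i ≤ C (LV i)) ∧
      (∀ j : ℕ, LV i < j → j < i → C j < C i))
    (P : ℕ → ℕ)
    (hP : ∀ i : ℕ, 1 ≤ i → i ≤ n →
      LV i + 1 ≤ P i ∧ P i ≤ i ∧
      (∀ k : ℕ, LV i + 1 ≤ k → k ≤ i → C (P i) ≤ C k) ∧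
      (∀ k : ℕ, P i < k → k ≤ i → C (P i) < C k))
    (Q : ℕ → ℕ)
    (hQ : ∀ x : ℕ, 1 ≤ x → x ≤ n →
      (P x = x → Q x = 0) ∧
      (P x < x →
        (1 ≤ Q x →
          Q x < P x ∧
          ∃ l' : ℕ, Q x + 1 ≤ l' ∧ l' ≤ P x ∧ S (P x + 1) x < S (Q x + 1) l') ∧
        (∀ l : ℕ, Q x < l → l < P x → ∀ l' : ℕ, l + 1 ≤ l' → l' ≤ P x →
          S (l + 1) l' ≤ S (P x + 1) x)))
    :
    (¬ ∃ x₁ x₂ : ℕ, 1 ≤ x₁ ∧ x₁ ≤ n ∧ 1 ≤ x₂ ∧ x₂ ≤ n ∧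
        P x₁ < x₁ ∧ P x₂ < x₂ ∧ 1 ≤ Q x₁ ∧ 1 ≤ Q x₂ ∧
        P x₁ < P x₂ ∧ Q x₁ < Q x₂ ∧ Q x₂ < P x₁) ∧
    (∀ x₁ x₂ : ℕ, 1 ≤ x₁ → x₁ ≤ n → 1 ≤ x₂ → x₂ ≤ n →
        P x₁ < x₁ → P x₂ < x₂ → 1 ≤ Q x₁ → 1 ≤ Q x₂ →
        ¬(Q x₁ < Q x₂ ∧ Q x₂ < P x₁ ∧ P x₁ < P x₂)) := by
  have hSC : ∀ l m : ℕ, l ≤ m → S (l + 1) m = C m - C l := by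
    intro l m hlm
    have hIoc : ∀ a b : ℕ, Finset.Icc (a + 1) b = Finset.Ioc a b := by
      intro a b; ext k; simp only [Finset.mem_Icc, Finset.mem_Ioc]; omega
    have h := Finset.sum_Ioc_consecutive A (Nat.zero_le l) hlm
    rw [hC, hC, hS, hS, hS, hIoc l m, hIoc 0 m, hIoc 0 l]
    linarith
  have key : ∀ x₁ x₂ : ℕ, 1 ≤ x₁ → x₁ ≤ n → 1 ≤ x₂ → x₂ ≤ n →
      P x₁ < x₁ → P x₂ < x₂ → 1 ≤ Q x₁ → 1 ≤ Q x₂ →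
      ¬(Q x₁ < Q x₂ ∧ Q x₂ < P x₁ ∧ P x₁ < P x₂) := by
    rintro x₁ x₂ h1 h1n h2 h2n hc1 hc2 _ hq2 ⟨hqq, hqp, hpp⟩
    obtain ⟨-, hLV1, -⟩ := hLV x₁ h1 h1n
    obtain ⟨-, hLV2, -⟩ := hLV x₂ h2 h2n
    obtain ⟨hP1, -, hmin1, hgt1⟩ := hP x₁ h1 h1n
    obtain ⟨hP2, -, hmin2, hgt2⟩ := hP x₂ h2 h2n
    -- No rise inside `(Q x, P x]` exceeds that of the candidate `(P x, x)`.
    have hmax : ∀ x, 1 ≤ x → x ≤ n → P x < x → ∀ l m, Q x < l → l < P x → l < m → m ≤ P x →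
        C m - C l ≤ C x - C (P x) := by
      intro x hx hxn hc l m hl hlP hlm hm
      have h := ((hQ x hx hxn).2 hc).2 l hl hlP m hlm hm
      rwa [hSC l m hlm.le, hSC (P x) x hc.le] at h
    have hmax1 := hmax x₁ h1 h1n hc1
    have hmax2 := hmax x₂ h2 h2n hc2
    obtain ⟨-, l, hql, hl, hrise⟩ := ((hQ x₂ h2 h2n).2 hc2).1 hq2
    rw [hSC (P x₂) x₂ hc2.le, hSC (Q x₂) l (by omega)] at hrise
    have hx1 := hgt1 x₁ hc1 le_rfl
    have hx2 := hgt2 x₂ hc2 le_rfl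
    rcases le_or_gt (P x₂) x₁ with hle | hlt
    · have hCp := hgt1 (P x₂) hpp hle
      have hout : P x₁ ≤ LV x₂ := by
        by_contra hcon
        have := hmin2 (P x₁) (by omega) (by omega)
        linarith
      have hv := hLV2 (by omega)
      have hne : P x₁ ≠ LV x₂ := by
        intro he; rw [← he] at hv; linarith
      have := hmax2 (P x₁) (LV x₂) hqp hpp (by omega) (by omega)
      linarith
    · have h12 := hmax2 (P x₁) x₁ hqp hpp hc1 hlt.le
      rcases le_or_gt l (P x₁) with hlp | hlp
      · have := hmax1 (Q x₂) l hqq hqp hql hlp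
        linarith
      · have hcmp := hmax2 (P x₁) l hqp hpp hlp hl
        have hout : Q x₂ ≤ LV x₁ := by
          by_contra hcon
          have := hmin1 (Q x₂) (by omega) (by omega)
          linarith
        have hv := hLV1 (by omega)
        have hne : Q x₂ ≠ LV x₁ := by
          intro he; rw [← he] at hv; linarith
        have := hmax1 (Q x₂) (LV x₁) hqq hqp (by omega) (by omega)
        linarith
  refine ⟨?_, key⟩
  rintro ⟨x₁, x₂, h1, h1n, h2, h2n, hc1, hc2, hq1, hq2, hpp, hqq, hqp⟩
  exact key x₁ x₂ h1 h1n h2 h2n hc1 hc2 hq1 hq2 ⟨hqq, hqp, hpp⟩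
end

section
/- For every integer n ≥ 1, T(n) = 1 + Σ_{j=2}^{n} T(n−j)·M(j). Equivalently, T(n) = 1 + Σ_{j=0}^{n−2} T(n−2−j)·M(j+2). -/
/-!
In the recurrence for `T n`, the factor `T (n - j)` does not depend on `i`, and the remaining inner
sum `∑ i ∈ [1, j - 1], T (i - 1) * M (j - i)` is, after reversing the order of summation, the
recurrence defining `M j`. The second form is the first with the index shifted by `2`.
-/

theorem stmt_12
    (T M : ℕ → ℕ)
    (hT0 : T 0 = 1)
    (hT : ∀ n : ℕ, 1 ≤ n →
      T n = 1 + ∑ j ∈ Finset.Icc 2 n, ∑ i ∈ Finset.Icc 1 (j - 1),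
        T (i - 1) * M (j - i) * T (n - j))
    (hM0 : M 0 = 0) (hM1 : M 1 = 1)
    (hM : ∀ n : ℕ, 2 ≤ n →
      M n = ∑ i ∈ Finset.Icc 2 n, M (i - 1) * T (n - i))
    :
    ∀ n : ℕ, 1 ≤ n →
      T n = 1 + ∑ j ∈ Finset.Icc 2 n, T (n - j) * M j ∧
      T n = 1 + ∑ j ∈ Finset.range (n - 1), T (n - 2 - j) * M (j + 2) := by
  intro n hn
  have first : T n = 1 + ∑ j ∈ Finset.Icc 2 n, T (n - j) * M j := by
    rw [hT n hn]
    congr 1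
    refine Finset.sum_congr rfl fun j hj => ?_
    rw [Finset.mem_Icc] at hj
    rw [← Finset.sum_mul, mul_comm, hM j hj.1]
    congr 1
    -- The reflection `i ↦ j + 1 - i` carries `[1, j - 1]` onto `[2, j]`.
    refine Finset.sum_bij' (fun i _ => j + 1 - i) (fun i _ => j + 1 - i) ?_ ?_ ?_ ?_ ?_
    · intro i hi; simp only [Finset.mem_Icc] at hi ⊢; omega
    · intro i hi; simp only [Finset.mem_Icc] at hi ⊢; omega
    · intro i hi; simp only [Finset.mem_Icc] at hi ⊢; omega
    · intro i hi; simp only [Finset.mem_Icc] at hi ⊢; omega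
    · intro i hi
      simp only [Finset.mem_Icc] at hi
      rw [show j + 1 - i - 1 = j - i by omega, show j - (j + 1 - i) = i - 1 by omega, mul_comm]
  refine ⟨first, first.trans ?_⟩
  congr 1
  refine Finset.sum_bij' (fun j _ => j - 2) (fun j _ => j + 2) ?_ ?_ ?_ ?_ ?_
  · intro j hj; simp only [Finset.mem_Icc, Finset.mem_range] at hj ⊢; omega
  · intro j hj; simp only [Finset.mem_Icc, Finset.mem_range] at hj ⊢; omega
  · intro j hj; simp only [Finset.mem_Icc] at hj ⊢; omega
  · intro j hj; simp
  · intro j hj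
    simp only [Finset.mem_Icc] at hj
    rw [show n - 2 - (j - 2) = n - j by omega, show j - 2 + 2 = j by omega]
end

section
/- In the ring of formal power series ℚ⟦X⟧, the generating functions satisfy p = X + X·p·q. -/
/-!
The identity is compared coefficientwise. Degrees `0` and `1` are the initial values `M 0 = 0` and
`M 1 = 1`. In degree `n + 2` the right-hand side is the convolution `∑ k ≤ n + 1, M k * T (n + 1 - k)`,
which is the recurrence for `M (n + 2)` reindexed by `i = k + 1`, plus a term `k = 0` that is zero.
-/

theorem stmt_14
    (T M : ℕ → ℕ)
    (hT0 : T 0 = 1)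
    (hT : ∀ n : ℕ, 1 ≤ n →
      T n = 1 + ∑ j ∈ Finset.Icc 2 n, ∑ i ∈ Finset.Icc 1 (j - 1),
        T (i - 1) * M (j - i) * T (n - j))
    (hM0 : M 0 = 0) (hM1 : M 1 = 1)
    (hM : ∀ n : ℕ, 2 ≤ n →
      M n = ∑ i ∈ Finset.Icc 2 n, M (i - 1) * T (n - i))
    (p q : PowerSeries ℚ)
    (hp : p = PowerSeries.mk fun n => (M n : ℚ))
    (hq : q = PowerSeries.mk fun n => (T n : ℚ))
    :
    p = PowerSeries.X + PowerSeries.X * p * q := by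
  subst hp hq
  ext n
  rw [mul_assoc]
  match n with
  | 0 => simp [hM0]
  | 1 => simp [hM0, hM1, PowerSeries.coeff_succ_X_mul]
  | n + 2 =>
    rw [map_add, PowerSeries.coeff_succ_X_mul, PowerSeries.coeff_mul,
      Finset.Nat.sum_antidiagonal_eq_sum_range_succ_mk, PowerSeries.coeff_X]
    -- The `k = 0` term of the convolution vanishes because `M 0 = 0`;
    -- the remaining sum, over `k + 1`, is the recurrence for `M` with `i = k + 2`.
    rw [Finset.sum_range_succ']
    simp only [PowerSeries.coeff_mk, hM0, hM (n + 2) (by omega)]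
    rw [← Finset.Ico_add_one_right_eq_Icc, Finset.sum_Ico_eq_sum_range]
    push_cast
    simp only [zero_mul, add_zero]
    rw [zero_add]
    refine Finset.sum_congr rfl fun k _ => ?_
    rw [show 2 + k - 1 = k + 1 by omega, show n + 2 - (2 + k) = n - k by omega]
end

section
/- In the ring of formal power series ℚ⟦X⟧, the generating functions satisfy (1 − X)·q = 1 + (1 − X)·q·(p − X). -/
/-!
With `M 0 = 0`, the two recurrences say `p = X + X q p` and `q = 1 / (1 - X) + (X q p) q`.
The first gives `X q p = p - X`; substituting this into the second and multiplying by `1 - X`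
yields the claim. The lemma `coeff_X_mul_mul` identifies the convolution occurring in both
recurrences with the coefficients of `X q p`.
-/

/-- The boundary term `T (j - 1) * M 0` of the Cauchy product vanishes, so the
sum may stop at `i = j - 1`. -/
lemma coeff_X_mul_mul (T M : ℕ → ℕ) (hM0 : M 0 = 0) (j : ℕ) :
    PowerSeries.coeff j (PowerSeries.X * ((PowerSeries.mk fun n => (T n : ℚ)) *
      PowerSeries.mk fun n => (M n : ℚ))) =
    ((∑ i ∈ Finset.Icc 1 (j - 1), T (i - 1) * M (j - i) : ℕ) : ℚ) := by
  cases j with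
  | zero => simp
  | succ m =>
    rw [PowerSeries.coeff_succ_X_mul, PowerSeries.coeff_mul,
      Finset.Nat.sum_antidiagonal_eq_sum_range_succ_mk, Finset.sum_range_succ]
    simp only [PowerSeries.coeff_mk, Nat.sub_self, hM0, Nat.cast_zero, mul_zero, add_zero,
      Nat.add_sub_cancel]
    push_cast
    refine Finset.sum_nbij' (fun k => k + 1) (fun i => i - 1) ?_ ?_ ?_ ?_ ?_
    · intro k hk; simp at hk ⊢; omega
    · intro k hk; simp at hk ⊢; omega
    · intro k hk; simp
    · intro k hk; simp at hk ⊢; omega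
    · intro k hk; simp

theorem stmt_15
    (T M : ℕ → ℕ)
    (hT0 : T 0 = 1)
    (hT : ∀ n : ℕ, 1 ≤ n →
      T n = 1 + ∑ j ∈ Finset.Icc 2 n, ∑ i ∈ Finset.Icc 1 (j - 1),
        T (i - 1) * M (j - i) * T (n - j))
    (hM0 : M 0 = 0) (hM1 : M 1 = 1)
    (hM : ∀ n : ℕ, 2 ≤ n →
      M n = ∑ i ∈ Finset.Icc 2 n, M (i - 1) * T (n - i))
    (p q : PowerSeries ℚ)
    (hp : p = PowerSeries.mk fun n => (M n : ℚ))
    (hq : q = PowerSeries.mk fun n => (T n : ℚ))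
    :
    (1 - PowerSeries.X) * q = 1 + (1 - PowerSeries.X) * q * (p - PowerSeries.X) := by
  have hX := coeff_X_mul_mul T M hM0
  rw [← hp, ← hq] at hX
  have h1 : p = PowerSeries.X + PowerSeries.X * (q * p) := by
    ext n
    rw [map_add, hX, hp, PowerSeries.coeff_mk, PowerSeries.coeff_X]
    rcases Nat.lt_or_ge n 2 with h | h
    · interval_cases n <;> simp [hM0, hM1]
    · rw [if_neg (by omega), zero_add, hM n h]
      congr 1
      -- The two convolutions are related by the reflection `i ↦ n + 1 - i`.
      refine Finset.sum_nbij' (fun i => n + 1 - i) (fun i => n + 1 - i) ?_ ?_ ?_ ?_ ?_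
      · intro k hk; simp at hk ⊢; omega
      · intro k hk; simp at hk ⊢; omega
      · intro k hk; simp at hk ⊢; omega
      · intro k hk; simp at hk ⊢; omega
      · intro k hk
        simp only [Finset.mem_Icc] at hk
        rw [mul_comm, show n + 1 - k - 1 = n - k by omega,
          show n - (n + 1 - k) = k - 1 by omega]
  have h2 : q = PowerSeries.mk 1 + PowerSeries.X * (q * p) * q := by
    ext n
    rw [map_add, PowerSeries.coeff_mul, Finset.Nat.sum_antidiagonal_eq_sum_range_succ_mk]
    simp only [hX]
    rw [hq]
    simp only [PowerSeries.coeff_mk, Pi.one_apply]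
    rcases Nat.eq_zero_or_pos n with rfl | h
    · simp [hT0]
    · rw [hT n h]
      push_cast
      congr 1
      simp only [← Finset.sum_mul]
      -- The terms `j = 0` and `j = 1` have an empty inner sum.
      refine Finset.sum_subset ?_ ?_
      · intro k hk; simp at hk ⊢; omega
      · intro k hk hk'
        simp only [Finset.mem_range, Finset.mem_Icc] at hk hk'
        rw [Finset.Icc_eq_empty (by omega)]
        simp
  have h3 : (PowerSeries.mk 1 : PowerSeries ℚ) * (1 - PowerSeries.X) = 1 :=
    PowerSeries.mk_one_mul_one_sub_eq_one ℚ
  linear_combination (1 - PowerSeries.X) * h2 + h3 - (1 - PowerSeries.X) * q * h1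
end

section
/- In the ring of formal power series ℚ⟦X⟧, the generating function q of the number of MSS-trees satisfies the algebraic equation (X³ − X)·q² + q − 1 = 0. -/
/-!
Translating the recurrences into generating functions gives
`p = X + X * (p * q)` and `q = 1 / (1 - X) + X * (q * p * q)`: in both sums the indices of the
factors add up to `n - 1`, and the missing boundary terms vanish because `M 0 = 0`.
The first relation says `p * (1 - X * q) = X`, so multiplying the second by
`(1 - X) * (1 - X * q)` eliminates `p` and leaves the quadratic equation for `q`.
-/

/-- Shift of summation index turning the sums of the recurrences into Cauchy product sums. -/
lemma sum_Icc_eq_sum_range_shift (f : ℕ → ℚ) (a m : ℕ) :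
    ∑ i ∈ Finset.Icc (a + 1) (a + m), f i = ∑ k ∈ Finset.range m, f (a + 1 + k) := by
  rw [← Finset.Ico_add_one_right_eq_Icc, Finset.sum_Ico_eq_sum_range]
  congr 2
  omega

theorem stmt_16
    (T M : ℕ → ℕ)
    (hT0 : T 0 = 1)
    (hT : ∀ n : ℕ, 1 ≤ n →
      T n = 1 + ∑ j ∈ Finset.Icc 2 n, ∑ i ∈ Finset.Icc 1 (j - 1),
        T (i - 1) * M (j - i) * T (n - j))
    (hM0 : M 0 = 0) (hM1 : M 1 = 1)
    (hM : ∀ n : ℕ, 2 ≤ n →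
      M n = ∑ i ∈ Finset.Icc 2 n, M (i - 1) * T (n - i))
    (p q : PowerSeries ℚ)
    (hp : p = PowerSeries.mk fun n => (M n : ℚ))
    (hq : q = PowerSeries.mk fun n => (T n : ℚ))
    :
    (PowerSeries.X ^ 3 - PowerSeries.X) * q ^ 2 + q - 1 = 0 := by
  have hpq : p = PowerSeries.X + PowerSeries.X * (p * q) := by
    ext n
    rcases n with _ | m
    · simp [hp, hM0]
    rw [map_add, PowerSeries.coeff_succ_X_mul, PowerSeries.coeff_mul,
      Finset.Nat.sum_antidiagonal_eq_sum_range_succ_mk, Finset.sum_range_succ']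
    rcases m with _ | m
    · simp [hp, hM0, hM1, PowerSeries.coeff_X]
    simp only [hp, hq, PowerSeries.coeff_mk, PowerSeries.coeff_X]
    rw [hM (m + 1 + 1) (by omega)]
    push_cast
    rw [show m + 1 + 1 = 1 + (m + 1) by omega, sum_Icc_eq_sum_range_shift]
    simp only [hM0, Nat.cast_zero, zero_mul, add_zero]
    rw [zero_add]
    refine Finset.sum_congr rfl fun k _ => ?_
    rw [show 1 + 1 + k - 1 = k + 1 by omega,
      show 1 + (m + 1) - (1 + 1 + k) = m - k by omega]
  have hqq : q = PowerSeries.mk 1 + PowerSeries.X * (q * p * q) := by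
    ext n
    rcases n with _ | m
    · simp [hq, hT0]
    have hc (k : ℕ) : PowerSeries.coeff k (q * p) =
        ∑ i ∈ Finset.Icc 1 k, (T (i - 1) : ℚ) * M (k + 1 - i) := by
      rw [PowerSeries.coeff_mul, Finset.Nat.sum_antidiagonal_eq_sum_range_succ_mk,
        Finset.sum_range_succ]
      have h := sum_Icc_eq_sum_range_shift (fun i => (T (i - 1) : ℚ) * M (k + 1 - i)) 0 k
      rw [zero_add, zero_add] at h
      rw [h]
      simp only [hp, hq, PowerSeries.coeff_mk, Nat.sub_self, hM0, Nat.cast_zero, mul_zero,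
        add_zero]
      refine Finset.sum_congr rfl fun i _ => ?_
      rw [show 1 + i - 1 = i by omega, show k + 1 - (1 + i) = k - i by omega]
    rw [map_add, PowerSeries.coeff_succ_X_mul, PowerSeries.coeff_mul,
      Finset.Nat.sum_antidiagonal_eq_sum_range_succ_mk, Finset.sum_range_succ']
    simp only [hc]
    simp only [hq, PowerSeries.coeff_mk]
    rw [hT (m + 1) (by omega)]
    push_cast
    rw [show m + 1 = 1 + m by omega, sum_Icc_eq_sum_range_shift]
    simp only [Pi.one_apply, Finset.Icc_eq_empty_of_lt Nat.zero_lt_one, Finset.sum_empty,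
      zero_mul, add_zero]
    congr 1
    refine Finset.sum_congr rfl fun k _ => ?_
    rw [Finset.sum_mul, show 1 + 1 + k - 1 = k + 1 by omega,
      show 1 + m - (1 + 1 + k) = m - (k + 1) by omega]
    refine Finset.sum_congr rfl fun i _ => ?_
    rw [show 1 + 1 + k - i = k + 1 + 1 - i by omega]
  have hS : (PowerSeries.mk 1 : PowerSeries ℚ) * (1 - PowerSeries.X) = 1 :=
    PowerSeries.mk_one_mul_one_sub_eq_one ℚ
  linear_combination (1 - PowerSeries.X) * (1 - PowerSeries.X * q) * hqq
    + PowerSeries.X * (1 - PowerSeries.X) * q ^ 2 * hpq + (1 - PowerSeries.X * q) * hS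
end

section
/- Let a, i, j, b be indices with 1 ≤ a ≤ i ≤ j ≤ b ≤ n. Suppose [i, j] is a maximum-sum segment of A on [a, b], meaning S(i,j) ≥ S(i',j') for all a ≤ i' ≤ j' ≤ b, and suppose S(i,j) ≥ 0. Then −S(i',j') ≤ S(i,j) for all i ≤ i' ≤ j' ≤ j. (This is the key inequality establishing the max-heap property of the transformation tree: the weight of the middle child, which is the maximum of −S over subsegments of [i,j], is at least the weight S(i,j) of its parent.) -/
/-!
Write `S i j = P + S i' j' + Q`, where `P` and `Q` are the sums over the part of `[i, j]` before `i'`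
and after `j'`. Each of `P`, `Q` is either empty, hence `0 ≤ S i j`, or the sum of a segment
of `[a, b]`, hence at most `S i j` by maximality. So `-(S i' j') = P + Q - S i j ≤ S i j`.
-/

theorem stmt_17
    (n : ℕ) (hn : 1 ≤ n)
    (A : ℕ → ℝ)
    (S : ℕ → ℕ → ℝ) (hS : ∀ i j : ℕ, S i j = ∑ k ∈ Finset.Icc i j, A k)
    (a i j b : ℕ) (h1a : 1 ≤ a) (hai : a ≤ i) (hij : i ≤ j) (hjb : j ≤ b) (hbn : b ≤ n)
    (hmax : ∀ i' j' : ℕ, a ≤ i' → i' ≤ j' → j' ≤ b → S i' j' ≤ S i j)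
    (hnonneg : 0 ≤ S i j)
    :
    ∀ i' j' : ℕ, i ≤ i' → i' ≤ j' → j' ≤ j → -(S i' j') ≤ S i j := by
  intro i' j' hi' hij' hj'
  have hIco : ∀ x y : ℕ, S x y = ∑ k ∈ Finset.Ico x (y + 1), A k := by
    intro x y
    rw [hS]
    congr 1
  -- The nonnegativity hypothesis covers the case of an empty prefix or suffix.
  have hprefix : ∑ k ∈ Finset.Ico i i', A k ≤ S i j := by
    rcases hi'.eq_or_lt with h | h
    · simpa [h] using hnonneg
    · have := hmax i (i' - 1) hai (by omega) (by omega)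
      rwa [hIco i (i' - 1), Nat.sub_add_cancel (by omega)] at this
  have hsuffix : ∑ k ∈ Finset.Ico (j' + 1) (j + 1), A k ≤ S i j := by
    rcases hj'.eq_or_lt with h | h
    · simpa [h] using hnonneg
    · have := hmax (j' + 1) j (by omega) (by omega) hjb
      rwa [hIco (j' + 1) j] at this
  have hleft := Finset.sum_Ico_consecutive A hi' (show i' ≤ j' + 1 by omega)
  have hright := Finset.sum_Ico_consecutive A (show i ≤ j' + 1 by omega)
    (show j' + 1 ≤ j + 1 by omega)
  have hwhole := hIco i j
  have hmid := hIco i' j'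
  linarith
end
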